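/- Let p > 0 and let L, L' be integers with 1 ≤ L < L'. Let A = (A_1,…,A_{L'}) be a random vector with i.i.d. components each having the generalized Gaussian GG(p^{1/p}, p) density f(a) = (p^{1−1/p} / (2Γ(1/p))) exp(−|a|^p/p), a ∈ ℝ; equivalently, the law of A is the product over L' coordinates of the measure on ℝ with density f with respect to Lebesgue measure. Then the law of the vector V = (A_1/‖A‖_p, …, A_L/‖A‖_p), i.e. the pushforward of the law of A under the map a ↦ (a_1/‖a‖_p, …, a_L/‖a‖_p), is absolutely continuous with respect to Lebesgue measure on ℝ^L with density q_1(u_1,…,u_L) = (p^L Γ(L'/p) / (2^L (Γ(1/p))^L Γ((L'−L)/p))) · (1 − ∑_{k=1}^{L} |u_k|^p)^{(L'−L)/p − 1} for (u_1,…,u_L) ∈ D_{p,L+1} and q_1 = 0 elsewhere. -/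

import Mathlib

open MeasureTheory

open scoped ENNReal

/-!
Write `N a = ∑ |a_k| ^ p`. Lebesgue measure on `ℝ^n` is homogeneous under `a ↦ r ^ (1 / p) • a`,
which multiplies `N` by `r`, so its image under `N` is a multiple of `t₊ ^ (n / p - 1) dt`; the
multiple is found by testing against the product of generalized Gaussian laws, whose total mass is
one. Let now `a = (x, y)` have density `h (N a)`. Replacing the block `y` by the variable
`r = N x + N y` produces the weight `(r - N x)₊ ^ (m / p - 1)`, where `m` is the dimension of `y`,
and rescaling `x = r ^ (1 / p) • u` factors it into a power of `r` and `(1 - N u)₊ ^ (m / p - 1)`.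
Hence `r` is independent of `u`, and the law of `u` does not depend on the profile `h`.
-/

theorem measure_ext_of_Iio {α : Type*} [TopologicalSpace α] [SecondCountableTopology α]
    [LinearOrder α] [OrderTopology α] [Nonempty α] [NoMaxOrder α] [MeasurableSpace α]
    [BorelSpace α] {μ ν : Measure α} (hμ : ∀ r, μ (Set.Iio r) ≠ ∞)
    (h : ∀ r, μ (Set.Iio r) = ν (Set.Iio r)) : μ = ν := by
  obtain ⟨s, hs⟩ := Filter.exists_seq_tendsto (Filter.atTop : Filter α)
  refine Measure.ext_of_generateFrom_of_iUnion (Set.range Set.Iio) (fun n => Set.Iio (s n))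
    (BorelSpace.measurable_eq.trans (borel_eq_generateFrom_Iio α)) isPiSystem_Iio
    (Set.iUnion_eq_univ_iff.mpr fun x => (hs.eventually_gt_atTop x).exists) (fun n => ⟨s n, rfl⟩)
    (fun n => hμ (s n)) ?_
  rintro _ ⟨r, rfl⟩
  exact h r

theorem lintegral_eq_pow_mul_lintegral_smul {E : Type*} [NormedAddCommGroup E] [NormedSpace ℝ E]
    [FiniteDimensional ℝ E] [MeasurableSpace E] [BorelSpace E] (μ : Measure E)
    [μ.IsAddHaarMeasure] (F : E → ℝ≥0∞) {c : ℝ} (hc : 0 < c) :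
    ∫⁻ x, F x ∂μ = ENNReal.ofReal (c ^ Module.finrank ℝ E) * ∫⁻ x, F (c • x) ∂μ := by
  have hcE : 0 < c ^ Module.finrank ℝ E := pow_pos hc _
  rw [← (measurableEmbedding_const_smul₀ hc.ne').lintegral_map F,
    Measure.map_addHaar_smul μ hc.ne', lintegral_smul_measure, smul_eq_mul, ← mul_assoc,
    ← ENNReal.ofReal_mul hcE.le, abs_of_pos (inv_pos.mpr hcE), mul_inv_cancel₀ hcE.ne',
    ENNReal.ofReal_one, one_mul]

theorem pi_withDensity_ofReal {ι : Type*} [Fintype ι] {E : ι → Type*}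
    [∀ i, MeasurableSpace (E i)] (μ : ∀ i, Measure (E i)) [∀ i, SigmaFinite (μ i)]
    {f : ∀ i, E i → ℝ} (hf : ∀ i, Integrable (f i) (μ i)) (hf_nonneg : ∀ i x, 0 ≤ f i x) :
    Measure.pi (fun i => (μ i).withDensity fun x => ENNReal.ofReal (f i x)) =
      (Measure.pi μ).withDensity fun x => ENNReal.ofReal (∏ i, f i (x i)) := by
  refine Measure.pi_eq fun s hs => ?_
  rw [withDensity_apply _ (.univ_pi hs), Measure.restrict_pi_pi,
    ← ofReal_integral_eq_lintegral_ofReal (.fintype_prod_dep fun i => (hf i).restrict)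
      (ae_of_all _ fun x => Finset.prod_nonneg fun i _ => hf_nonneg i (x i)),
    integral_fintype_prod_eq_prod,
    ENNReal.ofReal_prod_of_nonneg fun i _ => integral_nonneg (hf_nonneg i)]
  refine Finset.prod_congr rfl fun i _ => ?_
  rw [withDensity_apply _ (hs i),
    ofReal_integral_eq_lintegral_ofReal (hf i).restrict (ae_of_all _ (hf_nonneg i))]

theorem lintegral_pi_eq_lintegral_lintegral_sumElim {ι κ n α : Type*} [Fintype ι] [Fintype κ]
    [Fintype n] [MeasureSpace α] [SigmaFinite (volume : Measure α)] (e : ι ⊕ κ ≃ n)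
    {F : (n → α) → ℝ≥0∞} (hF : Measurable F) :
    ∫⁻ a, F a = ∫⁻ x : ι → α, ∫⁻ y : κ → α, F (Sum.elim x y ∘ e.symm) := by
  have h_eq : (fun z : (ι → α) × (κ → α) => Sum.elim z.1 z.2 ∘ e.symm) =
      MeasurableEquiv.piCongrLeft (fun _ => α) e ∘
        (MeasurableEquiv.sumPiEquivProdPi fun _ => α).symm := by
    funext z k
    obtain ⟨i | j, rfl⟩ := e.surjective k
    · exact (congrArg (Sum.elim z.1 z.2) (e.symm_apply_apply _)).trans
        (Equiv.piCongrLeft_sumInl (fun _ => α) e z.1 z.2 i).symm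
    · exact (congrArg (Sum.elim z.1 z.2) (e.symm_apply_apply _)).trans
        (Equiv.piCongrLeft_sumInr (fun _ => α) e z.1 z.2 j).symm
  have h_pres : MeasurePreserving fun z : (ι → α) × (κ → α) => Sum.elim z.1 z.2 ∘ e.symm :=
    h_eq ▸ (volume_measurePreserving_piCongrLeft (fun _ => α) e).comp
      (volume_measurePreserving_sumPiEquivProdPi_symm fun _ => α)
  rw [← h_pres.lintegral_comp hF]
  exact lintegral_prod _ (hF.comp h_pres.measurable).aemeasurable

/-- The truncated power `t₊ ^ s`, which vanishes for `t ≤ 0`, as a function valued in `ℝ≥0∞`. It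
expresses densities supported on a half-line or on a ball without restricting the measure. -/
noncomputable def truncRpow (s t : ℝ) : ℝ≥0∞ := ENNReal.ofReal (if 0 < t then t ^ s else 0)

@[fun_prop]
theorem measurable_truncRpow (s : ℝ) : Measurable (truncRpow s) :=
  ENNReal.measurable_ofReal.comp <|
    (measurable_id.pow_const s).ite measurableSet_Ioi measurable_const

theorem truncRpow_of_pos (s : ℝ) {t : ℝ} (ht : 0 < t) :
    truncRpow s t = ENNReal.ofReal (t ^ s) := by
  rw [truncRpow, if_pos ht]

theorem truncRpow_of_nonpos (s : ℝ) {t : ℝ} (ht : t ≤ 0) : truncRpow s t = 0 := by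
  rw [truncRpow, if_neg ht.not_gt, ENNReal.ofReal_zero]

theorem truncRpow_mul (s : ℝ) {r : ℝ} (hr : 0 < r) (t : ℝ) :
    truncRpow s (r * t) = truncRpow s r * truncRpow s t := by
  rcases le_or_gt t 0 with ht | ht
  · rw [truncRpow_of_nonpos s ht, mul_zero,
      truncRpow_of_nonpos s (mul_nonpos_of_nonneg_of_nonpos hr.le ht)]
  · rw [truncRpow_of_pos s (mul_pos hr ht), truncRpow_of_pos s hr, truncRpow_of_pos s ht,
      Real.mul_rpow hr.le ht.le, ENNReal.ofReal_mul (by positivity)]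

theorem ofReal_ite_lt_one_mul_rpow {K : ℝ} (hK : 0 ≤ K) (s t : ℝ) :
    ENNReal.ofReal (if t < 1 then K * (1 - t) ^ s else 0) =
      ENNReal.ofReal K * truncRpow s (1 - t) := by
  simp only [truncRpow, ← ENNReal.ofReal_mul hK, mul_ite, mul_zero, sub_pos]

theorem lintegral_truncRpow_mul (s : ℝ) (φ : ℝ → ℝ≥0∞) :
    ∫⁻ t, truncRpow s t * φ t = ∫⁻ t in Set.Ioi 0, ENNReal.ofReal (t ^ s) * φ t := by
  rw [← lintegral_indicator measurableSet_Ioi]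
  refine lintegral_congr fun t => ?_
  rcases le_or_gt t 0 with ht | ht
  · rw [truncRpow_of_nonpos s ht, zero_mul, Set.indicator_of_notMem (Set.notMem_Ioi.mpr ht)]
  · rw [truncRpow_of_pos s ht, Set.indicator_of_mem (Set.mem_Ioi.mpr ht)]

theorem setLIntegral_Iio_truncRpow {q r : ℝ} (hq : 0 < q) (hr : 0 < r) :
    ∫⁻ t in Set.Iio r, truncRpow (q - 1) t = ENNReal.ofReal (r ^ q / q) := by
  have h_int : IntegrableOn (fun t : ℝ => t ^ (q - 1)) (Set.Ioc 0 r) :=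
    (intervalIntegral.intervalIntegrable_rpow' (by linarith)).1
  have h_val : ∫ t in Set.Ioc 0 r, t ^ (q - 1) = r ^ q / q := by
    rw [← intervalIntegral.integral_of_le hr.le, integral_rpow (.inl (by linarith)),
      sub_add_cancel, Real.zero_rpow hq.ne', sub_zero]
  rw [← h_val, ofReal_integral_eq_lintegral_ofReal h_int
      ((ae_restrict_iff' measurableSet_Ioc).mpr <| ae_of_all _ fun t ht => by
        exact Real.rpow_nonneg ht.1.le _),
    setLIntegral_congr Ioo_ae_eq_Ioc.symm, ← lintegral_indicator measurableSet_Iio,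
    ← lintegral_indicator measurableSet_Ioo]
  refine lintegral_congr fun t => ?_
  rcases le_or_gt t 0 with ht | ht
  · simp [Set.indicator_apply, truncRpow_of_nonpos _ ht, ht.not_gt]
  · simp [Set.indicator_apply, truncRpow_of_pos _ ht, ht]

theorem lintegral_truncRpow_mul_exp_neg_div {q p : ℝ} (hq : 0 < q) (hp : 0 < p) :
    ∫⁻ t, truncRpow (q - 1) t * ENNReal.ofReal (Real.exp (-t / p)) =
      ENNReal.ofReal (p ^ q * Real.Gamma q) := by
  have h_val : ∫ t in Set.Ioi (0 : ℝ), t ^ (q - 1) * Real.exp (-t / p) = p ^ q * Real.Gamma q := by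
    simpa only [one_div, inv_inv, inv_mul_eq_div, neg_div] using
      Real.integral_rpow_mul_exp_neg_mul_Ioi hq (one_div_pos.mpr hp)
  have h_pos : 0 < p ^ q * Real.Gamma q := mul_pos (by positivity) (Real.Gamma_pos_of_pos hq)
  rw [lintegral_truncRpow_mul, ← h_val, ofReal_integral_eq_lintegral_ofReal
    (.of_integral_ne_zero (h_val ▸ h_pos.ne'))
    ((ae_restrict_iff' measurableSet_Ioi).mpr <| ae_of_all _ fun t (ht : 0 < t) => by positivity)]
  refine setLIntegral_congr_fun measurableSet_Ioi fun t (ht : 0 < t) => ?_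
  exact (ENNReal.ofReal_mul (by positivity)).symm

theorem map_eq_smul_withDensity_truncRpow {α : Type*} [MeasurableSpace α] {μ : Measure α}
    {N : α → ℝ} (hN : Measurable N) (hN_nonneg : ∀ x, 0 ≤ N x) {q : ℝ} (hq : 0 < q)
    (h_finite : μ {x | N x < 1} ≠ ∞)
    (h_pow : ∀ r, 0 < r → μ {x | N x < r} = ENNReal.ofReal (r ^ q) * μ {x | N x < 1}) :
    μ.map N =
      (ENNReal.ofReal q * μ {x | N x < 1}) • volume.withDensity (truncRpow (q - 1)) := by
  have h_Iio (r : ℝ) : μ.map N (Set.Iio r) = μ {x | N x < r} :=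
    Measure.map_apply hN measurableSet_Iio
  have h_nonpos {r : ℝ} (hr : r ≤ 0) : μ {x | N x < r} = 0 := by
    simp [(hr.trans (hN_nonneg _)).not_gt]
  refine measure_ext_of_Iio (fun r => ?_) fun r => ?_ <;> rw [h_Iio] <;>
    rcases le_or_gt r 0 with hr | hr
  · simp [h_nonpos hr]
  · rw [h_pow r hr]
    finiteness
  · have h_zero : ∫⁻ t in Set.Iio r, truncRpow (q - 1) t = 0 :=
      setLIntegral_eq_zero measurableSet_Iio fun t (ht : t < r) =>
        truncRpow_of_nonpos _ (ht.le.trans hr)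
    simp [h_nonpos hr, withDensity_apply, h_zero]
  · rw [h_pow r hr, Measure.smul_apply, withDensity_apply _ measurableSet_Iio,
      setLIntegral_Iio_truncRpow hq hr, smul_eq_mul, mul_right_comm, ← ENNReal.ofReal_mul hq.le,
      mul_div_cancel₀ _ hq.ne']

/-- `powSum p x = ‖x‖_p ^ p`. The power is kept instead of the norm since it is additive under
concatenation of vectors, and since no triangle inequality is available for `p < 1`. -/
noncomputable def powSum (p : ℝ) {ι : Type*} [Fintype ι] (x : ι → ℝ) : ℝ := ∑ k, |x k| ^ p

section PowSum

variable {ι κ n : Type*} [Fintype ι] [Fintype κ] [Fintype n] {p : ℝ}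

@[fun_prop]
theorem measurable_powSum (p : ℝ) : Measurable fun x : ι → ℝ => powSum p x := by
  unfold powSum
  fun_prop

theorem powSum_nonneg (p : ℝ) (x : ι → ℝ) : 0 ≤ powSum p x :=
  Finset.sum_nonneg fun _ _ => by positivity

theorem powSum_sumElim_comp_symm (p : ℝ) (e : ι ⊕ κ ≃ n) (x : ι → ℝ) (y : κ → ℝ) :
    powSum p (Sum.elim x y ∘ e.symm) = powSum p x + powSum p y := by
  simp only [powSum, Function.comp_apply,
    e.symm.sum_comp fun i : ι ⊕ κ => |(Sum.elim x y i : ℝ)| ^ p, Fintype.sum_sum_type,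
    Sum.elim_inl, Sum.elim_inr]

theorem powSum_rpow_smul (hp : p ≠ 0) {r : ℝ} (hr : 0 < r) (x : ι → ℝ) :
    powSum p (r ^ (1 / p) • x) = r * powSum p x := by
  rw [powSum, powSum, Finset.mul_sum]
  refine Finset.sum_congr rfl fun k _ => ?_
  rw [Pi.smul_apply, smul_eq_mul, abs_mul, Real.mul_rpow (abs_nonneg _) (abs_nonneg _),
    abs_of_pos (by positivity), ← Real.rpow_mul hr.le, one_div_mul_cancel hp, Real.rpow_one]

theorem lintegral_eq_rpow_mul_lintegral_rpow_smul (p : ℝ) (F : (ι → ℝ) → ℝ≥0∞) {r : ℝ}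
    (hr : 0 < r) :
    ∫⁻ x, F x =
      ENNReal.ofReal (r ^ (Fintype.card ι / p)) * ∫⁻ x, F (r ^ (1 / p) • x) := by
  rw [lintegral_eq_pow_mul_lintegral_smul volume F (Real.rpow_pos_of_pos hr (1 / p)),
    Module.finrank_fintype_fun_eq_card, ← Real.rpow_natCast, ← Real.rpow_mul hr.le,
    one_div_mul_eq_div]

theorem volume_powSum_lt (hp : p ≠ 0) {r : ℝ} (hr : 0 < r) :
    volume {x : ι → ℝ | powSum p x < r} =
      ENNReal.ofReal (r ^ (Fintype.card ι / p)) * volume {x : ι → ℝ | powSum p x < 1} := by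
  have h_meas (s : ℝ) : MeasurableSet {x : ι → ℝ | powSum p x < s} :=
    measurable_powSum p measurableSet_Iio
  rw [← lintegral_indicator_one (h_meas r), ← lintegral_indicator_one (h_meas 1),
    lintegral_eq_rpow_mul_lintegral_rpow_smul p _ hr]
  simp only [Set.indicator_apply, Set.mem_ofPred_eq, powSum_rpow_smul hp hr,
    mul_lt_iff_lt_one_right hr, Pi.one_apply]

theorem volume_powSum_lt_one_lt_top (hp : 0 < p) :
    volume {x : ι → ℝ | powSum p x < 1} < ∞ := by
  refine (measure_mono fun x hx => ?_).trans_lt (isCompact_Icc (a := -1) (b := 1)).measure_lt_top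
  have h_abs (k : ι) : |x k| < 1 := by
    have h_le : |x k| ^ p ≤ powSum p x :=
      Finset.single_le_sum (f := fun k => |x k| ^ p) (fun _ _ => by positivity) (Finset.mem_univ k)
    exact (Real.rpow_lt_one_iff' (abs_nonneg _) hp).mp (h_le.trans_lt hx)
  exact ⟨fun k => (abs_lt.mp (h_abs k)).1.le, fun k => (abs_lt.mp (h_abs k)).2.le⟩

theorem map_powSum_volume_eq_smul [Nonempty ι] (hp : 0 < p) :
    (volume : Measure (ι → ℝ)).map (powSum p) =
      (ENNReal.ofReal (Fintype.card ι / p) * volume {x : ι → ℝ | powSum p x < 1}) •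
        volume.withDensity (truncRpow (Fintype.card ι / p - 1)) :=
  map_eq_smul_withDensity_truncRpow (measurable_powSum p) (powSum_nonneg p)
    (div_pos (Nat.cast_pos.mpr Fintype.card_pos) hp) (volume_powSum_lt_one_lt_top hp).ne
    fun _ hr => volume_powSum_lt hp.ne' hr

end PowSum

section GeneralizedGaussian

variable {p : ℝ}

/-- The normalizing constant of the generalized Gaussian distribution `GG(p^{1/p}, p)`. -/
noncomputable def ggNormalization (p : ℝ) : ℝ := p ^ (1 - 1 / p) / (2 * Real.Gamma (1 / p))

theorem ggNormalization_pos (hp : 0 < p) : 0 < ggNormalization p := by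
  have := Real.Gamma_pos_of_pos (one_div_pos.mpr hp)
  unfold ggNormalization
  positivity

/-- The density of the generalized Gaussian distribution `GG(p^{1/p}, p)`. -/
noncomputable def ggDensity (p a : ℝ) : ℝ :=
  ggNormalization p * Real.exp (-|a| ^ p / p)

theorem ggDensity_nonneg (hp : 0 < p) (a : ℝ) : 0 ≤ ggDensity p a :=
  mul_nonneg (ggNormalization_pos hp).le (Real.exp_nonneg _)

theorem integral_ggDensity (hp : 0 < p) : ∫ a, ggDensity p a = 1 := by
  have := Real.Gamma_pos_of_pos (one_div_pos.mpr hp)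
  have h_half : ∫ a in Set.Ioi (0 : ℝ), Real.exp (-a ^ p / p) =
      p ^ (1 / p) * (1 / p * Real.Gamma (1 / p)) := by
    have h := integral_exp_neg_mul_rpow hp (one_div_pos.mpr hp)
    rw [Real.Gamma_add_one (by positivity), one_div p, Real.inv_rpow hp.le, neg_div,
      Real.rpow_neg hp.le, inv_inv] at h
    simpa only [one_div, neg_mul, inv_mul_eq_div, neg_div] using h
  simp only [ggDensity, ggNormalization]
  rw [integral_const_mul, integral_comp_abs (f := fun a => Real.exp (-a ^ p / p)), h_half,
    Real.rpow_sub hp, Real.rpow_one]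
  field_simp

theorem integrable_ggDensity (hp : 0 < p) : Integrable (ggDensity p) :=
  .of_integral_ne_zero (integral_ggDensity hp ▸ one_ne_zero)

theorem prod_ggDensity {ι : Type*} [Fintype ι] (p : ℝ) (a : ι → ℝ) :
    ∏ i, ggDensity p (a i) =
      ggNormalization p ^ Fintype.card ι * Real.exp (-powSum p a / p) := by
  simp only [ggDensity, powSum]
  rw [Finset.prod_mul_distrib, Finset.prod_const, ← Real.exp_sum, ← Finset.sum_div,
    Finset.sum_neg_distrib, Finset.card_univ]

theorem pi_withDensity_ggDensity (ι : Type*) [Fintype ι] (hp : 0 < p) :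
    Measure.pi (fun _ : ι => volume.withDensity fun a => ENNReal.ofReal (ggDensity p a)) =
      volume.withDensity fun a : ι → ℝ =>
        ENNReal.ofReal (ggNormalization p ^ Fintype.card ι * Real.exp (-powSum p a / p)) := by
  simp only [← prod_ggDensity]
  exact pi_withDensity_ofReal _ (fun _ => integrable_ggDensity hp) fun _ => ggDensity_nonneg hp

theorem lintegral_ggNormalization_pow_mul_exp_neg_powSum (ι : Type*) [Fintype ι] (hp : 0 < p) :
    ∫⁻ a : ι → ℝ,
      ENNReal.ofReal (ggNormalization p ^ Fintype.card ι * Real.exp (-powSum p a / p)) = 1 := by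
  simp only [← prod_ggDensity]
  have h_int : Integrable fun a : ι → ℝ => ∏ i, ggDensity p (a i) :=
    .fintype_prod fun _ => integrable_ggDensity hp
  rw [← ofReal_integral_eq_lintegral_ofReal h_int
    (ae_of_all _ fun a => Finset.prod_nonneg fun i _ => ggDensity_nonneg hp (a i)),
    integral_fintype_prod_volume_eq_pow, integral_ggDensity hp, one_pow, ENNReal.ofReal_one]

end GeneralizedGaussian

/-- The constant `C` for which the image of Lebesgue measure on `ℝ^n` under `powSum p` has density
`C * t₊ ^ (n / p - 1)`. -/
noncomputable def radialConst (p : ℝ) (n : ℕ) : ℝ :=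
  (2 * Real.Gamma (1 / p) / p) ^ n / Real.Gamma (n / p)

theorem radialConst_pos {p : ℝ} (hp : 0 < p) {n : ℕ} (hn : 0 < n) : 0 < radialConst p n := by
  have := Real.Gamma_pos_of_pos (one_div_pos.mpr hp)
  have : 0 < Real.Gamma (n / p) := Real.Gamma_pos_of_pos (by positivity)
  unfold radialConst
  positivity

theorem radialConst_mul_ggNormalization {p : ℝ} (hp : 0 < p) {n : ℕ} (hn : 0 < n) :
    radialConst p n * (ggNormalization p ^ n * (p ^ (n / p) * Real.Gamma (n / p))) = 1 := by
  have := Real.Gamma_pos_of_pos (one_div_pos.mpr hp)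
  have : 0 < Real.Gamma (n / p) := Real.Gamma_pos_of_pos (by positivity)
  have h_rpow : p ^ ((n : ℝ) / p) = (p ^ (1 / p)) ^ n := by
    rw [← Real.rpow_natCast, ← Real.rpow_mul hp.le, one_div_mul_eq_div]
  have : 0 < p ^ (1 / p) := by positivity
  rw [radialConst, ggNormalization, h_rpow, Real.rpow_sub hp, Real.rpow_one, div_pow, div_pow,
    div_pow, mul_pow]
  field_simp

theorem radialConst_div_radialConst_add {p : ℝ} (hp : 0 < p) (l : ℕ) {m : ℕ} (hm : 0 < m) :
    radialConst p m / radialConst p (l + m) =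
      p ^ l * Real.Gamma ((l + m : ℕ) / p) /
        (2 ^ l * Real.Gamma (1 / p) ^ l * Real.Gamma (m / p)) := by
  have := Real.Gamma_pos_of_pos (one_div_pos.mpr hp)
  have : 0 < Real.Gamma (m / p) := Real.Gamma_pos_of_pos (by positivity)
  have : 0 < Real.Gamma ((l + m : ℕ) / p) := Real.Gamma_pos_of_pos (by positivity)
  rw [radialConst, radialConst, pow_add, div_pow _ _ l, mul_pow _ _ l]
  field_simp

section Radial

variable {ι κ n : Type*} [Fintype ι] [Fintype κ] [Fintype n] {p : ℝ}

theorem map_powSum_volume [Nonempty ι] (hp : 0 < p) :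
    (volume : Measure (ι → ℝ)).map (powSum p) =
      ENNReal.ofReal (radialConst p (Fintype.card ι)) •
        volume.withDensity (truncRpow (Fintype.card ι / p - 1)) := by
  have h_card : 0 < Fintype.card ι := Fintype.card_pos
  set c := ggNormalization p ^ Fintype.card ι
  set D := c * (p ^ (Fintype.card ι / p : ℝ) * Real.Gamma (Fintype.card ι / p))
  have hc : 0 ≤ c := pow_nonneg (ggNormalization_pos hp).le _
  have h_lintegral : ∫⁻ s, truncRpow (Fintype.card ι / p - 1) s *
      ENNReal.ofReal (c * Real.exp (-s / p)) = ENNReal.ofReal D := by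
    simp only [ENNReal.ofReal_mul hc, mul_left_comm _ (ENNReal.ofReal c), D]
    rw [lintegral_const_mul _ (by fun_prop),
      lintegral_truncRpow_mul_exp_neg_div (by positivity) hp]
  have h_mass := lintegral_ggNormalization_pow_mul_exp_neg_powSum ι hp
  rw [← lintegral_map (f := fun s => ENNReal.ofReal (c * Real.exp (-s / p))) (by fun_prop)
      (measurable_powSum p), map_powSum_volume_eq_smul hp, lintegral_smul_measure,
    lintegral_withDensity_eq_lintegral_mul _ (by fun_prop) (by fun_prop)] at h_mass
  simp only [Pi.mul_apply, h_lintegral, smul_eq_mul] at h_mass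
  have hD : radialConst p (Fintype.card ι) * D = 1 := radialConst_mul_ggNormalization hp h_card
  have hD_pos : 0 < D := pos_of_mul_pos_right (hD ▸ one_pos) (radialConst_pos hp h_card).le
  rw [map_powSum_volume_eq_smul hp, ENNReal.eq_inv_of_mul_eq_one_left h_mass,
    ← ENNReal.ofReal_inv_of_pos hD_pos, ← eq_inv_of_mul_eq_one_left hD]

theorem lintegral_comp_powSum [Nonempty ι] (hp : 0 < p) {φ : ℝ → ℝ≥0∞} (hφ : Measurable φ) :
    ∫⁻ x : ι → ℝ, φ (powSum p x) =
      ENNReal.ofReal (radialConst p (Fintype.card ι)) *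
        ∫⁻ r, truncRpow (Fintype.card ι / p - 1) r * φ r := by
  rw [← lintegral_map hφ (measurable_powSum p), map_powSum_volume hp, lintegral_smul_measure,
    smul_eq_mul, lintegral_withDensity_eq_lintegral_mul _ (by fun_prop) hφ]
  simp only [Pi.mul_apply]

theorem lintegral_comp_add_powSum [Nonempty ι] (hp : 0 < p) {φ : ℝ → ℝ≥0∞} (hφ : Measurable φ)
    (t : ℝ) :
    ∫⁻ x : ι → ℝ, φ (t + powSum p x) =
      ENNReal.ofReal (radialConst p (Fintype.card ι)) *
        ∫⁻ r, truncRpow (Fintype.card ι / p - 1) (r - t) * φ r := by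
  rw [lintegral_comp_powSum hp (φ := fun s => φ (t + s)) (by fun_prop),
    ← lintegral_add_left_eq_self (fun r => truncRpow _ (r - t) * φ r) t]
  simp only [add_sub_cancel_left]

theorem lintegral_truncRpow_sub_powSum_mul (hp : p ≠ 0) (s r : ℝ) {g : (ι → ℝ) → ℝ≥0∞}
    (hg : Measurable g) :
    ∫⁻ x, truncRpow s (r - powSum p x) * g (fun k => x k / r ^ (1 / p)) =
      truncRpow (Fintype.card ι / p + s) r * ∫⁻ u, truncRpow s (1 - powSum p u) * g u := by
  rcases le_or_gt r 0 with hr | hr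
  · have h_zero (x : ι → ℝ) : truncRpow s (r - powSum p x) = 0 :=
      truncRpow_of_nonpos s (sub_nonpos.mpr (hr.trans (powSum_nonneg p x)))
    simp only [h_zero, zero_mul, lintegral_zero, truncRpow_of_nonpos _ hr]
  · have h_smul (u : ι → ℝ) : truncRpow s (r - powSum p (r ^ (1 / p) • u)) *
        g (fun k => (r ^ (1 / p) • u) k / r ^ (1 / p)) =
          truncRpow s r * (truncRpow s (1 - powSum p u) * g u) := by
      rw [powSum_rpow_smul hp hr, ← mul_one_sub, truncRpow_mul s hr, mul_assoc]
      simp only [Pi.smul_apply, smul_eq_mul,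
        mul_div_cancel_left₀ _ (Real.rpow_pos_of_pos hr (1 / p)).ne']
    rw [lintegral_eq_rpow_mul_lintegral_rpow_smul p _ hr, lintegral_congr h_smul,
      lintegral_const_mul _ (by fun_prop), ← mul_assoc, truncRpow_of_pos s hr,
      truncRpow_of_pos _ hr, Real.rpow_add hr, ENNReal.ofReal_mul (by positivity)]

theorem lintegral_radial_mul_comp_normalize [Nonempty κ] (hp : 0 < p) (e : ι ⊕ κ ≃ n)
    {h : ℝ → ℝ≥0∞} (hh : Measurable h) {g : (ι → ℝ) → ℝ≥0∞} (hg : Measurable g) :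
    ∫⁻ a : n → ℝ, h (powSum p a) * g (fun k => a (e (.inl k)) / powSum p a ^ (1 / p)) =
      ENNReal.ofReal (radialConst p (Fintype.card κ)) *
        ((∫⁻ r, truncRpow (Fintype.card n / p - 1) r * h r) *
          ∫⁻ u, truncRpow (Fintype.card κ / p - 1) (1 - powSum p u) * g u) := by
  have h_card : (Fintype.card ι / p + (Fintype.card κ / p - 1) : ℝ) = Fintype.card n / p - 1 := by
    rw [← Fintype.card_congr e, Fintype.card_sum, Nat.cast_add]
    ring
  calc ∫⁻ a : n → ℝ, h (powSum p a) * g (fun k => a (e (.inl k)) / powSum p a ^ (1 / p))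
    _ = ∫⁻ x : ι → ℝ, ∫⁻ y : κ → ℝ, h (powSum p x + powSum p y) *
          g (fun k => x k / (powSum p x + powSum p y) ^ (1 / p)) := by
      rw [lintegral_pi_eq_lintegral_lintegral_sumElim e (by fun_prop)]
      simp only [powSum_sumElim_comp_symm, Function.comp_apply, e.symm_apply_apply, Sum.elim_inl]
    _ = ENNReal.ofReal (radialConst p (Fintype.card κ)) * ∫⁻ x : ι → ℝ, ∫⁻ r,
          truncRpow (Fintype.card κ / p - 1) (r - powSum p x) *
            (h r * g (fun k => x k / r ^ (1 / p))) := by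
      rw [← lintegral_const_mul _ (by fun_prop)]
      exact lintegral_congr fun x => lintegral_comp_add_powSum hp
        (φ := fun r => h r * g (fun k => x k / r ^ (1 / p))) (by fun_prop) (powSum p x)
    _ = ENNReal.ofReal (radialConst p (Fintype.card κ)) * ∫⁻ r, h r * ∫⁻ x : ι → ℝ,
          truncRpow (Fintype.card κ / p - 1) (r - powSum p x) *
            g (fun k => x k / r ^ (1 / p)) := by
      rw [lintegral_lintegral_swap (by fun_prop)]
      congr 1
      refine lintegral_congr fun r => ?_
      rw [← lintegral_const_mul _ (by fun_prop)]
      exact lintegral_congr fun x => mul_left_comm _ _ _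
    _ = _ := by
      simp only [lintegral_truncRpow_sub_powSum_mul hp.ne' _ _ hg, h_card]
      rw [← lintegral_mul_const _ (by fun_prop)]
      congr 1
      exact lintegral_congr fun r => by ring

theorem map_normalize_withDensity_powSum [Nonempty κ] (hp : 0 < p) (e : ι ⊕ κ ≃ n)
    {h : ℝ → ℝ≥0∞} (hh : Measurable h) (h_one : ∫⁻ a : n → ℝ, h (powSum p a) = 1) :
    Measure.map (fun (a : n → ℝ) k => a (e (.inl k)) / powSum p a ^ (1 / p))
        (volume.withDensity fun a => h (powSum p a)) =
      volume.withDensity fun u : ι → ℝ =>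
        ENNReal.ofReal (radialConst p (Fintype.card κ) / radialConst p (Fintype.card n)) *
          truncRpow (Fintype.card κ / p - 1) (1 - powSum p u) := by
  have : Nonempty n := ‹Nonempty κ›.map fun j => e (.inr j)
  have h_pos : 0 < radialConst p (Fintype.card n) := radialConst_pos hp Fintype.card_pos
  have h_radial : ∫⁻ r, truncRpow (Fintype.card n / p - 1) r * h r =
      ENNReal.ofReal (radialConst p (Fintype.card n))⁻¹ := by
    rw [ENNReal.ofReal_inv_of_pos h_pos]
    exact ENNReal.eq_inv_of_mul_eq_one_left <| by
      rw [mul_comm, ← lintegral_comp_powSum hp hh, h_one]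
  refine Measure.ext_of_lintegral _ fun g hg => ?_
  rw [lintegral_map hg (by fun_prop),
    lintegral_withDensity_eq_lintegral_mul _ (by fun_prop) (by fun_prop),
    lintegral_withDensity_eq_lintegral_mul _ (by fun_prop) hg]
  simp only [Pi.mul_apply, mul_assoc]
  rw [lintegral_radial_mul_comp_normalize hp e hh hg, h_radial,
    lintegral_const_mul _ (by fun_prop), ← mul_assoc,
    ← ENNReal.ofReal_mul (radialConst_pos hp Fintype.card_pos).le, ← div_eq_mul_inv]

end Radial

theorem pushforward_of_normalized_gg_vector_has_marginal_density_general {ι n : Type*} [Fintype ι]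
    [Fintype n] {p : ℝ} (hp : 0 < p) (f : ι ↪ n) (hf : Fintype.card ι < Fintype.card n)
    {h : ℝ → ℝ≥0∞} (hh : Measurable h) (h_one : ∫⁻ a : n → ℝ, h (powSum p a) = 1) :
    Measure.map (fun (a : n → ℝ) k => a (f k) / powSum p a ^ (1 / p))
        (volume.withDensity fun a => h (powSum p a)) =
      volume.withDensity fun u : ι → ℝ =>
        ENNReal.ofReal
          (if powSum p u < 1 then
            p ^ Fintype.card ι * Real.Gamma (Fintype.card n / p) /
                (2 ^ Fintype.card ι * Real.Gamma (1 / p) ^ Fintype.card ι *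
                  Real.Gamma ((Fintype.card n - Fintype.card ι) / p)) *
              (1 - powSum p u) ^ ((Fintype.card n - Fintype.card ι) / p - 1)
          else 0) := by
  classical
  let κ : Type _ := ↥(Set.range f)ᶜ
  let e : ι ⊕ κ ≃ n :=
    ((Equiv.ofInjective f f.injective).sumCongr (.refl _)).trans (Equiv.Set.sumCompl _)
  have h_card : Fintype.card ι + Fintype.card κ = Fintype.card n :=
    Fintype.card_sum.symm.trans (Fintype.card_congr e)
  have hκ : 0 < Fintype.card κ := by omega
  have : Nonempty κ := Fintype.card_pos_iff.mp hκ
  have h_cast : (Fintype.card n - Fintype.card ι : ℝ) = Fintype.card κ := by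
    rw [← h_card, Nat.cast_add, add_sub_cancel_left]
  have h_const := radialConst_div_radialConst_add hp (Fintype.card ι) hκ
  rw [h_card] at h_const
  simp only [h_cast, ← h_const]
  have h_nonneg : 0 ≤ radialConst p (Fintype.card κ) / radialConst p (Fintype.card n) :=
    div_nonneg (radialConst_pos hp hκ).le (radialConst_pos hp (by omega)).le
  simp only [ofReal_ite_lt_one_mul_rpow h_nonneg]
  exact map_normalize_withDensity_powSum hp e hh h_one

theorem pushforward_of_normalized_gg_vector_has_marginal_density
    (p : ℝ) (hp : 0 < p) (L L' : ℕ) (hL : 1 ≤ L) (hLL' : L < L') :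
    Measure.map
        (fun a : Fin L' → ℝ => fun k : Fin L =>
          a (Fin.castLE hLL'.le k) / (∑ j, |a j| ^ p) ^ (1 / p))
        (Measure.pi fun _ : Fin L' =>
          volume.withDensity fun a : ℝ =>
            ENNReal.ofReal
              (p ^ (1 - 1 / p) / (2 * Real.Gamma (1 / p)) * Real.exp (-|a| ^ p / p))) =
      (volume : Measure (Fin L → ℝ)).withDensity fun u =>
        ENNReal.ofReal
          (if ∑ k, |u k| ^ p < 1 then
            p ^ L * Real.Gamma ((L' : ℝ) / p) /
                (2 ^ L * Real.Gamma (1 / p) ^ L * Real.Gamma (((L' : ℝ) - L) / p)) *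
              (1 - ∑ k, |u k| ^ p) ^ (((L' : ℝ) - L) / p - 1)
          else 0) := by
  refine (congrArg (Measure.map _) (pi_withDensity_ggDensity (Fin L') hp)).trans ?_
  simpa only [powSum, Fintype.card_fin, Fin.coe_castLEEmb] using
    pushforward_of_normalized_gg_vector_has_marginal_density_general hp (Fin.castLEEmb hLL'.le)
      (by simpa only [Fintype.card_fin]) (h := fun s => ENNReal.ofReal (_ * Real.exp (-s / p)))
      (by fun_prop) (lintegral_ggNormalization_pow_mul_exp_neg_powSum (Fin L') hp)
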